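/- arXiv:0912.2528 — 2 statements merged into one kernel-verified Lean document; each statement's English description precedes it below -/
import Mathlib

section
/- Let Λ = ℤ_p[[T]] and let Λ[ψ] = ℤ_p[ψ][[T]] where ℤ_p[ψ] is the ring of integers of a finite unramified extension ℚ_p(ψ) of ℚ_p. If M is a finitely generated torsion Λ[ψ]-module whose characteristic ideal over Λ[ψ] is generated by a power series f, then M, viewed as a Λ-module by restriction of scalars, is a finitely generated torsion Λ-module whose characteristic ideal over Λ is generated by the norm N_{ℚ_p(ψ)/ℚ_p}(f) (the product of the Galois conjugates of f applied coefficientwise). -/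
open PowerSeries

/-- `f` generates the characteristic ideal of `M`: by the structure theorem, `M` is
pseudo-isomorphic (a map with finite kernel and cokernel) to a finite direct sum
`⊕ᵢ R/(gᵢ)` with all `gᵢ ≠ 0`, and `f = ∏ᵢ gᵢ`. -/
def IsCharSeries (R : Type*) [CommRing R] (M : Type*) [AddCommGroup M] [Module R M]
    (f : R) : Prop :=
  ∃ (n : ℕ) (g : Fin n → R) (φ : M →ₗ[R] (∀ i, R ⧸ Ideal.span {g i})),
    (∀ i, g i ≠ 0) ∧ f = ∏ i, g i ∧
    Finite (LinearMap.ker φ) ∧ Finite ((∀ i, R ⧸ Ideal.span {g i}) ⧸ LinearMap.range φ)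

/-!
Write `R = A⟦X⟧` and `S = O⟦X⟧`, which is finite and free over `R`. By the structure theorem it
suffices to treat `S/(g)`, which over `R` is the cokernel of the matrix `G` of multiplication by
`g`, and `det G` is the norm of `g`. Only the primes dividing `det G` survive in the localization
`K` of the factorial ring `R` at the elements relatively prime to `det G`, so `K` is a principal
ideal ring and `G` has a Smith normal form over it. Clearing denominators gives
`A * G = diagonal h * B` over `R`, where `det A` and `det B` are relatively prime to `det G` and
`∏ i, h i` is associated to `det G`. The matrix `A` then induces a map from `coker G` to
`⨁ i, R/(h i)` whose kernel is killed by `det B` and `det G`, and whose cokernel is killed by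
`det A` and `∏ i, h i`.
Finitely generated modules killed by two relatively prime elements are finite, because `R` is local
of dimension at most two with finite residue field. Finally, the norm is the product of the
conjugates since distinct conjugations are linearly independent.
-/

section PseudoIso

variable {R M N P : Type*} [Ring R] [AddCommGroup M] [Module R M] [AddCommGroup N] [Module R N]
  [AddCommGroup P] [Module R P]

/-- A linear map is a pseudo-isomorphism if its kernel and cokernel are finite sets, the convention
appropriate to two-dimensional regular local rings with finite residue field. -/
structure IsPseudoIso (φ : M →ₗ[R] N) : Prop where
  finite_ker : Finite (LinearMap.ker φ)
  finite_coker : Finite (N ⧸ LinearMap.range φ)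

theorem IsPseudoIso.of_linearEquiv (e : M ≃ₗ[R] N) : IsPseudoIso (e : M →ₗ[R] N) where
  finite_ker := by rw [e.ker]; infer_instance
  finite_coker := by rw [e.range]; infer_instance

theorem finite_quotient_iff_index_ne_zero (p : Submodule R M) :
    Finite (M ⧸ p) ↔ p.toAddSubgroup.index ≠ 0 := by
  rw [← AddSubgroup.finiteIndex_iff, AddSubgroup.finiteIndex_iff_finite_quotient]
  rfl

theorem IsPseudoIso.comp {ψ : N →ₗ[R] P} {φ : M →ₗ[R] N} (hψ : IsPseudoIso ψ)
    (hφ : IsPseudoIso φ) : IsPseudoIso (ψ ∘ₗ φ) where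
  finite_ker := by
    have := hφ.finite_ker
    have := hψ.finite_ker
    let f : LinearMap.ker (ψ ∘ₗ φ) →+ LinearMap.ker ψ := (φ.restrict fun _ hx ↦ hx).toAddMonoidHom
    have : Finite f.ker := .of_injective (β := LinearMap.ker φ)
      (fun x ↦ ⟨x.1.1, congrArg Subtype.val x.2⟩)
      fun x y hxy ↦ Subtype.ext (Subtype.ext (congrArg (fun z : LinearMap.ker φ ↦ (z : M)) hxy))
    have : Finite (LinearMap.ker (ψ ∘ₗ φ) ⧸ f.ker) :=
      .of_equiv _ (QuotientAddGroup.quotientKerEquivRange f).symm.toEquiv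
    exact .of_addSubgroup_quotient f.ker
  finite_coker := by
    have hφ' := (finite_quotient_iff_index_ne_zero _).1 hφ.finite_coker
    have hψ' := (finite_quotient_iff_index_ne_zero _).1 hψ.finite_coker
    have hindex : (φ.range.toAddSubgroup.map ψ.toAddMonoidHom).index ≠ 0 := by
      rw [AddSubgroup.index_map]
      exact mul_ne_zero (ne_zero_of_dvd_ne_zero hφ' (AddSubgroup.index_dvd_of_le le_sup_left)) hψ'
    rw [LinearMap.range_comp]
    exact (finite_quotient_iff_index_ne_zero _).2 hindex

theorem IsPseudoIso.restrictScalars (A : Type*) [Ring A] [Module A M] [Module A N]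
    [LinearMap.CompatibleSMul M N A R] {φ : M →ₗ[R] N} (hφ : IsPseudoIso φ) :
    IsPseudoIso (φ.restrictScalars A) :=
  ⟨hφ.finite_ker, hφ.finite_coker⟩

section Pi

variable {ι : Type*} {N P : ι → Type*} [∀ i, AddCommGroup (N i)] [∀ i, Module R (N i)]
  [∀ i, AddCommGroup (P i)] [∀ i, Module R (P i)]

theorem range_piMap (θ : ∀ i, N i →ₗ[R] P i) :
    LinearMap.range (LinearMap.piMap θ) = Submodule.pi Set.univ fun i ↦ LinearMap.range (θ i) := by
  refine SetLike.coe_injective ?_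
  rw [LinearMap.coe_range, LinearMap.coe_piMap, Set.range_piMap, Submodule.coe_pi]
  rfl

theorem IsPseudoIso.piMap [Finite ι] {θ : ∀ i, N i →ₗ[R] P i} (hθ : ∀ i, IsPseudoIso (θ i)) :
    IsPseudoIso (LinearMap.piMap θ) where
  finite_ker := by
    have := fun i ↦ (hθ i).finite_ker
    exact .of_injective (β := ∀ i, LinearMap.ker (θ i)) (fun x i ↦ ⟨x.1 i, congrFun x.2 i⟩)
      fun x y hxy ↦ Subtype.ext <| funext fun i ↦ Subtype.ext_iff.1 (congrFun hxy i)
  finite_coker := by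
    have := fun i ↦ (hθ i).finite_coker
    let q := LinearMap.piMap fun i ↦ (LinearMap.range (θ i)).mkQ
    have hker : LinearMap.ker q = LinearMap.range (LinearMap.piMap θ) := by
      ext x
      simp [q, range_piMap, Submodule.mem_pi, funext_iff]
    rw [← hker]
    exact .of_equiv _ q.quotKerEquivRange.symm.toEquiv

end Pi

end PseudoIso

namespace IsCharSeries

variable {R M N : Type*} [CommRing R] [AddCommGroup M] [Module R M] [AddCommGroup N] [Module R N]

theorem exists_isPseudoIso {f : R} (h : IsCharSeries R M f) :
    ∃ (n : ℕ) (g : Fin n → R) (φ : M →ₗ[R] ∀ i, R ⧸ Ideal.span {g i}),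
      (∀ i, g i ≠ 0) ∧ f = ∏ i, g i ∧ IsPseudoIso φ :=
  let ⟨n, g, φ, hg, hf, hker, hcoker⟩ := h
  ⟨n, g, φ, hg, hf, hker, hcoker⟩

theorem of_isPseudoIso {f : R} {φ : M →ₗ[R] N} (hφ : IsPseudoIso φ) (h : IsCharSeries R N f) :
    IsCharSeries R M f :=
  let ⟨n, g, ψ, hg, hf, hψ⟩ := h.exists_isPseudoIso
  ⟨n, g, ψ ∘ₗ φ, hg, hf, (hψ.comp hφ).finite_ker, (hψ.comp hφ).finite_coker⟩

variable {ι : Type*} [Fintype ι]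

theorem pi_quotient_span {g : ι → R} (hg : ∀ i, g i ≠ 0) :
    IsCharSeries R (∀ i, R ⧸ Ideal.span {g i}) (∏ i, g i) := by
  let e := Fintype.equivFin ι
  let E := LinearEquiv.piCongrLeft' R (fun i ↦ R ⧸ Ideal.span {g i}) e
  exact ⟨Fintype.card ι, fun j ↦ g (e.symm j), E, fun i ↦ hg _, (e.symm.prod_comp g).symm,
    (IsPseudoIso.of_linearEquiv E).finite_ker, (IsPseudoIso.of_linearEquiv E).finite_coker⟩

theorem pi {M : ι → Type*} [∀ i, AddCommGroup (M i)] [∀ i, Module R (M i)] {f : ι → R}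
    (h : ∀ i, IsCharSeries R (M i) (f i)) : IsCharSeries R (∀ i, M i) (∏ i, f i) := by
  choose n g φ hg hf hφ using fun i ↦ (h i).exists_isPseudoIso
  let G : (Σ i, Fin (n i)) → R := fun k ↦ g k.1 k.2
  let E : (∀ i j, R ⧸ Ideal.span {g i j}) ≃ₗ[R] ∀ k, R ⧸ Ideal.span {G k} :=
    (LinearEquiv.piCurry R fun i (j : Fin (n i)) ↦ R ⧸ Ideal.span {g i j}).symm
  have hprod : ∏ i, f i = ∏ k, G k := by
    simp only [hf, G, Fintype.prod_sigma]
  rw [hprod]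
  exact (pi_quotient_span (g := G) fun k ↦ hg k.1 k.2).of_isPseudoIso
    ((IsPseudoIso.of_linearEquiv E).comp (.piMap hφ))

theorem of_associated {f f' : R} (hff' : Associated f f') (h : IsCharSeries R M f) :
    IsCharSeries R M f' := by
  obtain ⟨u, rfl⟩ := hff'
  obtain ⟨n, g, φ, hg, rfl, hφ⟩ := h.exists_isPseudoIso
  cases subsingleton_or_nontrivial R with
  | inl _ => rwa [Subsingleton.elim (_ * _) (∏ i, g i)]
  | inr _ =>
    let G : Option (Fin n) → R := fun o ↦ o.elim u g
    have hG : ∀ o, G o ≠ 0 := by rintro (_ | i); exacts [u.ne_zero, hg i]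
    have hu : Subsingleton (R ⧸ Ideal.span {G none}) :=
      Ideal.Quotient.subsingleton_iff.2 (Ideal.span_singleton_eq_top.2 u.isUnit)
    let π : (∀ o, R ⧸ Ideal.span {G o}) →ₗ[R] ∀ i, R ⧸ Ideal.span {g i} :=
      .pi fun i ↦ .proj (some i)
    have hπ : Function.Bijective π := by
      refine ⟨fun x y hxy ↦ funext ?_, fun y ↦ ⟨Option.rec 0 y, rfl⟩⟩
      rintro (_ | i)
      exacts [Subsingleton.elim _ _, congrFun hxy i]
    have hprod : (∏ i, g i) * u = ∏ o, G o := by simp [G, mul_comm]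
    rw [hprod]
    exact (pi_quotient_span hG).of_isPseudoIso
      ((IsPseudoIso.of_linearEquiv (LinearEquiv.ofBijective π hπ).symm).comp hφ)

end IsCharSeries

theorem isPrincipalIdealRing_of_forall_prime_dvd {R : Type*} [CommRing R] [IsDomain R]
    [UniqueFactorizationMonoid R] {D : R} (hD : D ≠ 0) (h : ∀ q : R, Prime q → q ∣ D) :
    IsPrincipalIdealRing R := by
  classical
  refine .of_prime_ne_bot fun P hP hP0 ↦ ?_
  obtain ⟨r, hrP, hr⟩ := hP.exists_mem_prime_of_ne_bot hP0
  let s := (UniqueFactorizationMonoid.factors D).toFinset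
  have hs : ∀ q ∈ s, Prime q := fun q hq ↦
    UniqueFactorizationMonoid.prime_of_factor q (Multiset.mem_toFinset.1 hq)
  -- Prime avoidance: `P` is covered by the finitely many `(q)` with `q ∣ D`, hence lies in one.
  have hcover : (P : Set R) ⊆ ⋃ q ∈ (s : Set R), (Ideal.span {q} : Set R) := by
    intro x hx
    obtain ⟨q, hq, hqx⟩ : ∃ q, Prime q ∧ q ∣ x := by
      rcases eq_or_ne x 0 with rfl | hx0
      · exact ⟨r, hr, dvd_zero r⟩
      · obtain ⟨q, hq, hqx⟩ := WfDvdMonoid.exists_irreducible_factor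
          (fun hu ↦ hP.ne_top (Ideal.eq_top_of_isUnit_mem P hx hu)) hx0
        exact ⟨q, hq.prime, hqx⟩
    obtain ⟨q', hq', hqq'⟩ :=
      UniqueFactorizationMonoid.exists_mem_factors_of_dvd hD hq.irreducible (h q hq)
    exact Set.mem_biUnion (Multiset.mem_toFinset.2 hq')
      (Ideal.mem_span_singleton.2 (hqq'.symm.dvd.trans hqx))
  obtain ⟨q, hq, hPq⟩ := (Ideal.subset_union_prime 0 0 fun q hq _ _ ↦
    (Ideal.span_singleton_prime (hs q hq).ne_zero).2 (hs q hq)).1 hcover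
  have hqr : Associated q r :=
    ((hs q hq).dvd_prime_iff_associated hr).1 (Ideal.mem_span_singleton.1 (hPq hrP))
  have hPeq : P = Ideal.span {q} :=
    hPq.antisymm ((Ideal.span_singleton_le_iff_mem P).2 (P.mem_of_dvd hqr.symm.dvd hrP))
  exact ⟨q, hPeq⟩

section AwayFrom

variable {R : Type*} [CommRing R] [IsDomain R] [UniqueFactorizationMonoid R]

/-- The multiplicative set of nonzero elements relatively prime to `D`. Localizing at it inverts
exactly the primes not dividing `D`. -/
def relPrimeSubmonoid (D : R) : Submonoid R where
  carrier := {s | s ≠ 0 ∧ IsRelPrime s D}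
  one_mem' := ⟨one_ne_zero, isRelPrime_one_left⟩
  mul_mem' ha hb := ⟨mul_ne_zero ha.1 hb.1, ha.2.mul_left hb.2⟩

theorem relPrimeSubmonoid_le_nonZeroDivisors (D : R) : relPrimeSubmonoid D ≤ nonZeroDivisors R :=
  fun _ hs ↦ mem_nonZeroDivisors_of_ne_zero hs.1

variable {D : R}

theorem mem_relPrimeSubmonoid_of_dvd {s t : R} (hst : s ∣ t) (ht : t ∈ relPrimeSubmonoid D) :
    s ∈ relPrimeSubmonoid D :=
  ⟨ne_zero_of_dvd_ne_zero ht.1 hst, ht.2.of_dvd_left hst⟩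

theorem exists_eq_mul_mem_relPrimeSubmonoid {x : R} (hx : x ≠ 0) :
    ∃ h, ∃ t ∈ relPrimeSubmonoid D, x = h * t ∧ ∀ s, IsRelPrime s D → IsRelPrime s h := by
  induction x using UniqueFactorizationMonoid.induction_on_prime with
  | h₁ => exact absurd rfl hx
  | h₂ x hu => exact ⟨x, 1, one_mem _, (mul_one x).symm, fun s _ ↦ hu.isRelPrime_right⟩
  | h₃ a q ha hq ih =>
    obtain ⟨h, t, ht, rfl, hh⟩ := ih ha
    by_cases hqD : q ∣ D
    · refine ⟨q * h, t, ht, (mul_assoc q h t).symm, fun s hs ↦ .mul_right ?_ (hh s hs)⟩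
      exact (hq.irreducible.isRelPrime_iff_not_dvd.2
        fun hqs ↦ hq.not_isUnit (hs hqs hqD)).symm
    · exact ⟨h, q * t, mul_mem ⟨hq.ne_zero, hq.irreducible.isRelPrime_iff_not_dvd.2 hqD⟩ ht,
        mul_left_comm q h t, hh⟩

variable {K : Type*} [CommRing K] [Algebra R K] [IsLocalization (relPrimeSubmonoid D) K]

theorem mem_relPrimeSubmonoid_of_isUnit_algebraMap {x : R} (hx : IsUnit (algebraMap R K x)) :
    x ∈ relPrimeSubmonoid D :=
  let ⟨_, hm, hxm⟩ := (IsLocalization.algebraMap_isUnit_iff (relPrimeSubmonoid D)).1 hx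
  mem_relPrimeSubmonoid_of_dvd hxm hm

theorem dvd_algebraMap_of_prime {q : K} (hq : Prime q) : q ∣ algebraMap R K D := by
  have hprime : ((Ideal.span {q}).comap (algebraMap R K)).IsPrime :=
    have := (Ideal.span_singleton_prime hq.ne_zero).2 hq
    Ideal.comap_isPrime _ _
  have hne : (Ideal.span {q}).comap (algebraMap R K) ≠ ⊥ := by
    intro hbot
    have hmap := IsLocalization.map_under (relPrimeSubmonoid D) K (Ideal.span {q})
    rw [Ideal.under, hbot, Ideal.map_bot] at hmap
    exact hq.ne_zero (Ideal.span_singleton_eq_bot.1 hmap.symm)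
  obtain ⟨r, hrq, hr⟩ := hprime.exists_mem_prime_of_ne_bot hne
  have hqr : q ∣ algebraMap R K r := Ideal.mem_span_singleton.1 hrq
  have hrD : r ∣ D := by
    by_contra hrD
    have hmem : r ∈ relPrimeSubmonoid D :=
      ⟨hr.ne_zero, hr.irreducible.isRelPrime_iff_not_dvd.2 hrD⟩
    exact hq.not_isUnit (isUnit_of_dvd_unit hqr (IsLocalization.map_units K ⟨r, hmem⟩))
  exact hqr.trans (map_dvd _ hrD)

theorem exists_associated_algebraMap {a : K} (ha : a ≠ 0) :
    ∃ h : R, Associated (algebraMap R K h) a ∧ ∀ s, IsRelPrime s D → IsRelPrime s h := by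
  obtain ⟨x, s, rfl⟩ := IsLocalization.exists_mk'_eq (relPrimeSubmonoid D) a
  have hx : x ≠ 0 := by
    rintro rfl
    exact ha (IsLocalization.mk'_zero s)
  obtain ⟨h, t, ht, rfl, hh⟩ := exists_eq_mul_mem_relPrimeSubmonoid (D := D) hx
  have hs := IsLocalization.map_units K s
  have ht' := IsLocalization.map_units K (⟨t, ht⟩ : relPrimeSubmonoid D)
  refine ⟨h, (associated_mul_unit_right _ _ ht').trans ?_, hh⟩
  rw [← map_mul, ← IsLocalization.mk'_spec K (h * t) s]
  exact associated_mul_unit_left _ _ hs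

variable (K) in
theorem isPrincipalIdealRing_of_isLocalization_relPrimeSubmonoid (hD : D ≠ 0) :
    IsPrincipalIdealRing K := by
  have : IsDomain K :=
    IsLocalization.isDomain_of_le_nonZeroDivisors K (relPrimeSubmonoid_le_nonZeroDivisors D)
  have : UniqueFactorizationMonoid K := .of_isLocalization (relPrimeSubmonoid D) K
  have hinj := IsLocalization.injective K (relPrimeSubmonoid_le_nonZeroDivisors D)
  exact isPrincipalIdealRing_of_forall_prime_dvd ((map_ne_zero_iff _ hinj).2 hD)
    fun _ hq ↦ dvd_algebraMap_of_prime hq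

end AwayFrom

section Smith

variable {ι : Type*} [Fintype ι] [DecidableEq ι]

theorem exists_isUnit_det_mul_eq_diagonal_mul {K : Type*} [CommRing K] [IsDomain K]
    [IsPrincipalIdealRing K] {G : Matrix ι ι K} (hG : G.det ≠ 0) :
    ∃ (U V : Matrix ι ι K) (a : ι → K), IsUnit U.det ∧ IsUnit V.det ∧
      U * G = Matrix.diagonal a * V := by
  have hinj : Function.Injective G.toLin' := Matrix.mulVec_injective_of_det_ne_zero hG
  let e := LinearEquiv.ofInjective G.toLin' hinj
  let std := Pi.basisFun K ι
  obtain ⟨b, a, c, hc⟩ := Submodule.exists_smith_normal_form_of_rank_eq std e.symm.finrank_eq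
  have hrepr : ∀ (n : LinearMap.range G.toLin') (i : ι), b.repr n i = a i * c.repr n i := by
    intro n i
    have hn : (n : ι → K) = ∑ k, (c.repr n k * a k) • b k := by
      conv_lhs => rw [← c.sum_repr n, Submodule.coe_sum]
      simp only [Submodule.coe_smul, hc, mul_smul]
    rw [hn, Module.Basis.repr_sum_self, mul_comm]
  refine ⟨b.toMatrix std, LinearMap.toMatrix std c e, a, ?_, e.isUnit_det std c, ?_⟩
  · have := b.invertibleToMatrix std
    exact Matrix.isUnit_det_of_invertible _
  · conv_lhs => rw [← LinearMap.toMatrix'_toLin' G, ← LinearMap.toMatrix_eq_toMatrix']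
    rw [basis_toMatrix_mul_linearMap_toMatrix]
    ext i j
    rw [Matrix.diagonal_mul, LinearMap.toMatrix_apply, LinearMap.toMatrix_apply]
    exact hrepr (e (std j)) i

theorem exists_map_eq_smul {R K m n : Type*} [CommRing R] [CommRing K] [Algebra R K]
    (S : Submonoid R) [IsLocalization S K] [Finite m] [Finite n] (U : Matrix m n K) :
    ∃ s ∈ S, ∃ A : Matrix m n R, A.map (algebraMap R K) = algebraMap R K s • U := by
  obtain ⟨s, hs⟩ :=
    IsLocalization.exist_integer_multiples_of_finite S fun x : m × n ↦ U x.1 x.2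
  choose c hc using hs
  refine ⟨s, s.2, .of fun i j ↦ c (i, j), ?_⟩
  ext i j
  exact (hc (i, j)).trans (Algebra.smul_def _ _)

variable {R : Type*} [CommRing R] [IsDomain R] [UniqueFactorizationMonoid R]

theorem exists_isUnit_det_mul_eq_diagonal_algebraMap_mul {D : R} (hD : D ≠ 0) {K : Type*}
    [CommRing K] [Algebra R K] [IsLocalization (relPrimeSubmonoid D) K] {G : Matrix ι ι K}
    (hG : G.det ≠ 0) :
    ∃ (U V : Matrix ι ι K) (h : ι → R), IsUnit U.det ∧ IsUnit V.det ∧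
      U * G = Matrix.diagonal (fun i ↦ algebraMap R K (h i)) * V ∧
      ∀ i s, IsRelPrime s D → IsRelPrime s (h i) := by
  have : IsDomain K :=
    IsLocalization.isDomain_of_le_nonZeroDivisors K (relPrimeSubmonoid_le_nonZeroDivisors D)
  have := isPrincipalIdealRing_of_isLocalization_relPrimeSubmonoid K hD
  obtain ⟨U, V, a, hU, hV, hUV⟩ := exists_isUnit_det_mul_eq_diagonal_mul hG
  have ha : ∏ i, a i ≠ 0 := by
    rw [← Matrix.det_diagonal]
    refine left_ne_zero_of_mul (b := V.det) ?_
    rw [← Matrix.det_mul, ← hUV, Matrix.det_mul]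
    exact mul_ne_zero hU.ne_zero hG
  choose h hassoc hrel using fun i ↦
    exists_associated_algebraMap (D := D) (Finset.prod_ne_zero_iff.1 ha i (Finset.mem_univ i))
  choose w hw using hassoc
  refine ⟨U, Matrix.diagonal (fun i ↦ (w i : K)) * V, h, hU, ?_, ?_, hrel⟩
  · rw [Matrix.det_mul, Matrix.det_diagonal, ← Units.coe_prod]
    exact (Units.isUnit _).mul hV
  · rw [hUV, ← Matrix.mul_assoc, Matrix.diagonal_mul_diagonal]
    simp only [hw]

theorem exists_mul_eq_diagonal_mul {G : Matrix ι ι R} (hG : G.det ≠ 0) :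
    ∃ (A B : Matrix ι ι R) (h : ι → R), A * G = Matrix.diagonal h * B ∧
      A.det ∈ relPrimeSubmonoid G.det ∧ B.det ∈ relPrimeSubmonoid G.det ∧
      Associated (∏ i, h i) G.det := by
  let K := Localization (relPrimeSubmonoid G.det)
  have hinj : Function.Injective (algebraMap R K) :=
    IsLocalization.injective K (relPrimeSubmonoid_le_nonZeroDivisors G.det)
  have hGK : (G.map (algebraMap R K)).det ≠ 0 := by
    rw [← RingHom.mapMatrix_apply, ← RingHom.map_det]
    exact (map_ne_zero_iff _ hinj).2 hG
  obtain ⟨U, V, h, hU, hV, hUV, hrel⟩ := exists_isUnit_det_mul_eq_diagonal_algebraMap_mul hG hGK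
  -- Stacking `U` on `V` gives both the same denominator.
  obtain ⟨s, hs, C, hC⟩ := exists_map_eq_smul (relPrimeSubmonoid G.det) (Matrix.fromRows U V)
  have hA : C.toRows₁.map (algebraMap R K) = algebraMap R K s • U := congrArg Matrix.toRows₁ hC
  have hB : C.toRows₂.map (algebraMap R K) = algebraMap R K s • V := congrArg Matrix.toRows₂ hC
  have hdet : ∀ {A : Matrix ι ι R} {W : Matrix ι ι K}, IsUnit W.det →
      A.map (algebraMap R K) = algebraMap R K s • W → A.det ∈ relPrimeSubmonoid G.det := by
    intro A W hW hAW
    refine mem_relPrimeSubmonoid_of_isUnit_algebraMap (K := K) ?_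
    rw [RingHom.map_det, RingHom.mapMatrix_apply, hAW, Matrix.det_smul]
    exact ((IsLocalization.map_units K ⟨s, hs⟩).pow _).mul hW
  have hmul : C.toRows₁ * G = Matrix.diagonal h * C.toRows₂ := by
    refine Matrix.map_injective hinj ?_
    simp only [Matrix.map_mul, hA, hB, Matrix.smul_mul, Matrix.mul_smul, hUV,
      Matrix.diagonal_map, map_zero]
  refine ⟨C.toRows₁, C.toRows₂, h, hmul, hdet hU hA, hdet hV hB, ?_⟩
  have hdets : C.toRows₁.det * G.det = (∏ i, h i) * C.toRows₂.det := by
    rw [← Matrix.det_mul, hmul, Matrix.det_mul, Matrix.det_diagonal]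
  have hh : IsRelPrime C.toRows₁.det (∏ i, h i) :=
    .prod_right fun i _ ↦ hrel i _ (hdet hU hA).2
  exact associated_of_dvd_dvd (hh.symm.dvd_of_dvd_mul_left ⟨_, hdets⟩)
    ((hdet hV hB).2.symm.dvd_of_dvd_mul_right (Dvd.intro_left _ hdets))

end Smith

section Finiteness

variable {R : Type*} [CommRing R]

theorem krullDimLE_quotient_span_pair {a b : R} (ha : a ∈ nonZeroDivisors R)
    (hab : ∀ x, a ∣ b * x → a ∣ x) (n : ℕ) [Ring.KrullDimLE (n + 2) R] :
    Ring.KrullDimLE n (R ⧸ Ideal.span {a, b}) := by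
  have hle : Ideal.span {a} ≤ Ideal.span {a, b} := Ideal.span_mono (by simp)
  have hb : Ideal.Quotient.mk (Ideal.span {a}) b ∈ nonZeroDivisors (R ⧸ Ideal.span {a}) := by
    refine mem_nonZeroDivisors_iff_left.2 fun z hz ↦ ?_
    obtain ⟨x, rfl⟩ := Ideal.Quotient.mk_surjective z
    rw [← map_mul, Ideal.Quotient.eq_zero_iff_dvd] at hz
    exact (Ideal.Quotient.eq_zero_iff_dvd _ _).2 (hab x hz)
  have hb0 : Ideal.Quotient.factor hle (Ideal.Quotient.mk _ b) = 0 :=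
    Ideal.Quotient.eq_zero_iff_mem.2 (Ideal.subset_span (by simp))
  rw [Ring.krullDimLE_iff, ← ENat.WithBot.add_le_add_one_right_iff,
    ← ENat.WithBot.add_le_add_one_right_iff]
  calc ringKrullDim (R ⧸ Ideal.span {a, b}) + 1 + 1
      ≤ ringKrullDim (R ⧸ Ideal.span {a}) + 1 := by
        gcongr
        exact ringKrullDim_succ_le_of_surjective _ (Ideal.Quotient.factor_surjective hle) hb hb0
    _ ≤ ringKrullDim R := ringKrullDim_quotient_succ_le_of_nonZeroDivisor ha
    _ ≤ n + 1 + 1 := by exact_mod_cast Ring.krullDimLE_iff.1 ‹Ring.KrullDimLE (n + 2) R›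

theorem finite_quotient_span_pair [IsDomain R] [UniqueFactorizationMonoid R] [IsNoetherianRing R]
    [IsLocalRing R] [Ring.KrullDimLE 2 R] [Finite (IsLocalRing.ResidueField R)] {a b : R}
    (ha : a ≠ 0) (hab : IsRelPrime a b) : Finite (R ⧸ Ideal.span {a, b}) := by
  have : Ring.KrullDimLE 0 (R ⧸ Ideal.span {a, b}) :=
    krullDimLE_quotient_span_pair (mem_nonZeroDivisors_of_ne_zero ha)
      (fun _ ↦ hab.dvd_of_dvd_mul_left) 0
  have : IsArtinianRing (R ⧸ Ideal.span {a, b}) := isArtinianRing_iff_krullDimLE_zero.2 this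
  exact IsLocalRing.finite_quotient_iff.2
    (IsLocalRing.exists_maximalIdeal_pow_le_of_isArtinianRing_quotient _)

theorem finite_of_forall_smul_eq_zero {N : Type*} [AddCommGroup N] [Module R N] [Module.Finite R N]
    {a b : R} (hfin : Finite (R ⧸ Ideal.span {a, b})) (ha : ∀ x : N, a • x = 0)
    (hb : ∀ x : N, b • x = 0) : Finite N := by
  have htors : Module.IsTorsionBySet R N (Ideal.span {a, b} : Ideal R) := by
    rw [← Module.isTorsionBySet_iff_is_torsion_by_span]
    rintro x ⟨c, rfl | rfl⟩
    exacts [ha x, hb x]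
  let _ : Module (R ⧸ Ideal.span {a, b}) N := htors.module
  have : IsScalarTower R (R ⧸ Ideal.span {a, b}) N := htors.isScalarTower
  have : Module.Finite (R ⧸ Ideal.span {a, b}) N := .of_restrictScalars_finite R _ N
  exact Module.finite_of_finite (R ⧸ Ideal.span {a, b})

section PowerSeries

variable (A : Type*) [CommRing A]

theorem X_mem_jacobson_powerSeries : (X : A⟦X⟧) ∈ Ring.jacobson A⟦X⟧ := by
  rw [← Ideal.jacobson_bot, Ideal.mem_jacobson_bot]
  intro f
  rw [isUnit_iff_constantCoeff]
  simp

instance krullDimLE_powerSeries [IsNoetherianRing A] (n : ℕ) [Ring.KrullDimLE n A] :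
    Ring.KrullDimLE (n + 1) A⟦X⟧ := by
  have hsurj : Function.Surjective ((Ideal.Quotient.mk (Ideal.span {(X : A⟦X⟧)})).comp C) := by
    intro z
    obtain ⟨f, rfl⟩ := Ideal.Quotient.mk_surjective z
    refine ⟨constantCoeff f, Ideal.Quotient.eq.2 (Ideal.mem_span_singleton.2 ?_)⟩
    simp [X_dvd_iff]
  rw [Ring.krullDimLE_iff]
  calc ringKrullDim A⟦X⟧
      ≤ ringKrullDim (A⟦X⟧ ⧸ Ideal.span {(X : A⟦X⟧)}) + 1 := by
        have hX := X_mem_jacobson_powerSeries A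
        simpa using
          ringKrullDim_le_ringKrullDim_quotient_add_encard _ (Set.singleton_subset_iff.2 hX)
    _ ≤ n + 1 := by
        gcongr
        exact (ringKrullDim_le_of_surjective _ hsurj).trans (Ring.krullDimLE_iff.1 inferInstance)

instance finite_residueField_powerSeries [IsLocalRing A] [Finite (IsLocalRing.ResidueField A)] :
    Finite (IsLocalRing.ResidueField A⟦X⟧) := by
  have : IsLocalHom (constantCoeff (R := A)) := ⟨fun _ ↦ isUnit_iff_constantCoeff.2⟩
  exact .of_injective _ (IsLocalRing.ResidueField.map (constantCoeff (R := A))).injective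

end PowerSeries

end Finiteness

section Cokernel

variable {R ι : Type*} [CommRing R] [Fintype ι]

theorem range_mulVecLin_le_comap {A B G H : Matrix ι ι R} (hmul : A * G = H * B) :
    LinearMap.range G.mulVecLin ≤ (LinearMap.range H.mulVecLin).comap A.mulVecLin := by
  rintro _ ⟨y, rfl⟩
  refine ⟨B.mulVec y, ?_⟩
  simp only [Matrix.mulVecLin_apply, Matrix.mulVec_mulVec, hmul]

variable [DecidableEq ι]

theorem det_smul_mem_range_mulVecLin (G : Matrix ι ι R) (x : ι → R) :
    G.det • x ∈ LinearMap.range G.mulVecLin :=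
  ⟨G.adjugate.mulVec x, by
    rw [Matrix.mulVecLin_apply, Matrix.mulVec_mulVec, Matrix.mul_adjugate, Matrix.smul_mulVec,
      Matrix.one_mulVec]⟩

theorem range_mulVecLin_diagonal (h : ι → R) :
    LinearMap.range (Matrix.diagonal h).mulVecLin =
      Submodule.pi Set.univ fun i ↦ Ideal.span {h i} := by
  ext x
  simp only [LinearMap.mem_range, Matrix.mulVecLin_apply, Submodule.mem_pi, Set.mem_univ,
    true_imp_iff, Ideal.mem_span_singleton, funext_iff, Matrix.mulVec_diagonal]
  exact ⟨fun ⟨y, hy⟩ i ↦ ⟨y i, (hy i).symm⟩, fun hx ↦ ⟨fun i ↦ (hx i).choose,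
    fun i ↦ (hx i).choose_spec.symm⟩⟩

theorem det_smul_mem_range_of_mulVec_mem_range [IsDomain R] {A B G H : Matrix ι ι R}
    (hmul : A * G = H * B) (hA : A.det ≠ 0) {x : ι → R}
    (hx : A.mulVec x ∈ LinearMap.range H.mulVecLin) :
    B.det • x ∈ LinearMap.range G.mulVecLin := by
  obtain ⟨y, hy⟩ := hx
  refine ⟨B.adjugate.mulVec y, Matrix.mulVec_injective_of_det_ne_zero hA ?_⟩
  calc A.mulVec (G.mulVec (B.adjugate.mulVec y))
      = H.mulVec ((B * B.adjugate).mulVec y) := by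
        simp only [Matrix.mulVec_mulVec, ← Matrix.mul_assoc, hmul]
    _ = B.det • H.mulVec y := by
        rw [Matrix.mul_adjugate, Matrix.smul_mulVec, Matrix.one_mulVec, Matrix.mulVec_smul]
    _ = A.mulVec (B.det • x) := by rw [Matrix.mulVec_smul, ← hy, Matrix.mulVecLin_apply]

variable [IsDomain R] [UniqueFactorizationMonoid R] [IsNoetherianRing R] [IsLocalRing R]
  [Ring.KrullDimLE 2 R] [Finite (IsLocalRing.ResidueField R)]

theorem isPseudoIso_mapQ_mulVecLin {A B G H : Matrix ι ι R} (hmul : A * G = H * B)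
    (hA : A.det ≠ 0) (hB : B.det ≠ 0) (hAH : IsRelPrime A.det H.det)
    (hBG : IsRelPrime B.det G.det) :
    IsPseudoIso (Submodule.mapQ _ _ A.mulVecLin (range_mulVecLin_le_comap hmul)) where
  finite_ker := by
    refine finite_of_forall_smul_eq_zero (finite_quotient_span_pair hB hBG) ?_ ?_
    all_goals
      rintro ⟨z, hz⟩
      obtain ⟨x, rfl⟩ := Submodule.Quotient.mk_surjective _ z
      refine Subtype.ext ((Submodule.Quotient.mk_eq_zero _).2 ?_)
    · exact det_smul_mem_range_of_mulVec_mem_range hmul hA ((Submodule.Quotient.mk_eq_zero _).1 hz)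
    · exact det_smul_mem_range_mulVecLin G x
  finite_coker := by
    refine finite_of_forall_smul_eq_zero (finite_quotient_span_pair hA hAH) ?_ ?_
    all_goals
      intro z
      obtain ⟨z, rfl⟩ := Submodule.Quotient.mk_surjective _ z
      obtain ⟨x, rfl⟩ := Submodule.Quotient.mk_surjective _ z
      refine (Submodule.Quotient.mk_eq_zero _).2 ?_
    · obtain ⟨y, hy⟩ := det_smul_mem_range_mulVecLin A x
      exact ⟨Submodule.Quotient.mk y, congrArg Submodule.Quotient.mk hy⟩
    · exact ⟨0, (map_zero _).trans
        ((Submodule.Quotient.mk_eq_zero _).2 (det_smul_mem_range_mulVecLin H x)).symm⟩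

namespace IsCharSeries

theorem quotient_range_mulVecLin {G : Matrix ι ι R} (hG : G.det ≠ 0) :
    IsCharSeries R ((ι → R) ⧸ LinearMap.range G.mulVecLin) G.det := by
  obtain ⟨A, B, h, hmul, hA, hB, hass⟩ := exists_mul_eq_diagonal_mul hG
  have hh : ∀ i, h i ≠ 0 := by simpa [Finset.prod_ne_zero_iff] using hass.ne_zero_iff.2 hG
  let e := (Submodule.quotEquivOfEq _ _ (range_mulVecLin_diagonal h)).trans
    (Submodule.quotientPi fun i ↦ Ideal.span {h i})
  have hAH : IsRelPrime A.det (Matrix.diagonal h).det := by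
    rw [Matrix.det_diagonal]
    exact hA.2.of_dvd_right hass.dvd
  exact ((pi_quotient_span hh).of_isPseudoIso ((IsPseudoIso.of_linearEquiv e).comp
    (isPseudoIso_mapQ_mulVecLin hmul hA.1 hB.1 hAH hB.2))).of_associated hass

theorem quotient_range_linearMap {V : Type*} [AddCommGroup V] [Module R V] [Module.Finite R V]
    [Module.Free R V] {u : V →ₗ[R] V} (hu : LinearMap.det u ≠ 0) :
    IsCharSeries R (V ⧸ LinearMap.range u) (LinearMap.det u) := by
  let b := Module.finBasis R V
  let G := LinearMap.toMatrix b b u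
  have hcomm : (b.equivFun : V →ₗ[R] _) ∘ₗ u = G.mulVecLin ∘ₗ b.equivFun :=
    LinearMap.ext fun x ↦ (LinearMap.toMatrix_mulVec_repr b b u x).symm
  have hrange : (LinearMap.range u).map (b.equivFun : V →ₗ[R] _) = LinearMap.range G.mulVecLin := by
    rw [← LinearMap.range_comp, hcomm, LinearEquiv.range_comp]
  rw [← LinearMap.det_toMatrix b] at hu ⊢
  exact (quotient_range_mulVecLin hu).of_isPseudoIso
    (.of_linearEquiv (Submodule.Quotient.equiv _ _ b.equivFun hrange))

theorem quotient_span_norm {S : Type*} [CommRing S] [IsDomain S] [Algebra R S]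
    [Module.Finite R S] [Module.Free R S] {g : S} (hg : g ≠ 0) :
    IsCharSeries R (S ⧸ Ideal.span {g}) (Algebra.norm R g) := by
  have hnorm : LinearMap.det (Algebra.lmul R S g) ≠ 0 := Algebra.norm_ne_zero_iff.2 hg
  have hrange : (Ideal.span {g}).restrictScalars R = LinearMap.range (Algebra.lmul R S g) := by
    ext x
    exact Ideal.mem_span_singleton.trans (exists_congr fun _ ↦ eq_comm)
  exact (quotient_range_linearMap hnorm).of_isPseudoIso (.of_linearEquiv
    ((Submodule.Quotient.restrictScalarsEquiv R _).symm.trans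
      (Submodule.quotEquivOfEq _ _ hrange)))

end IsCharSeries

end Cokernel

section RestrictScalars

variable {R S M : Type*} [CommRing R] [CommRing S] [Algebra R S]
  [AddCommGroup M] [Module R M] [Module S M] [IsScalarTower R S M]

theorem isTorsion_restrictScalars [IsDomain R] [Algebra.IsAlgebraic R S]
    (hM : Module.IsTorsion S M) : Module.IsTorsion R M := by
  intro m
  obtain ⟨s, hs⟩ := @hM m
  obtain ⟨r, hr, c, hc⟩ :=
    (Algebra.IsAlgebraic.isAlgebraic (R := R) (s : S)).exists_nonzero_dvd s.2
  refine ⟨⟨r, mem_nonZeroDivisors_of_ne_zero hr⟩, ?_⟩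
  calc r • m = c • (s : S) • m := by rw [smul_smul, mul_comm, ← hc, algebraMap_smul]
    _ = 0 := by rw [← Submonoid.smul_def, hs, smul_zero]

theorem IsCharSeries.restrictScalars [IsDomain R] [UniqueFactorizationMonoid R]
    [IsNoetherianRing R] [IsLocalRing R] [Ring.KrullDimLE 2 R]
    [Finite (IsLocalRing.ResidueField R)] [IsDomain S] [Module.Finite R S]
    [Module.Free R S] {f : S} (h : IsCharSeries S M f) : IsCharSeries R M (Algebra.norm R f) := by
  obtain ⟨n, g, φ, hg, rfl, hφ⟩ := h.exists_isPseudoIso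
  rw [map_prod]
  exact (IsCharSeries.pi fun i ↦ quotient_span_norm (hg i)).of_isPseudoIso (hφ.restrictScalars R)

end RestrictScalars

section Norm

variable {R S L ι : Type*} [CommRing R] [CommRing S] [Algebra R S] [CommRing L] [Algebra R L]
  [Fintype ι] {σ : ι → S →ₐ[R] L}

theorem diagonal_mul_conjugates [DecidableEq ι] (σ : ι → S →ₐ[R] L) (b : Module.Basis ι R S)
    (x : S) :
    Matrix.diagonal (fun k ↦ σ k x) * Matrix.of (fun k i ↦ σ k (b i)) =
      Matrix.of (fun k i ↦ σ k (b i)) * (Algebra.leftMulMatrix b x).map (algebraMap R L) := by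
  ext k j
  rw [Matrix.diagonal_mul, Matrix.mul_apply, Matrix.of_apply, ← map_mul,
    ← b.sum_repr (x * b j), map_sum]
  refine Finset.sum_congr rfl fun i _ ↦ ?_
  rw [map_smul, Algebra.smul_def, mul_comm, Matrix.map_apply, Algebra.leftMulMatrix_eq_repr_mul,
    Matrix.of_apply]

variable [IsDomain L]

theorem det_conjugates_ne_zero [DecidableEq ι] (hσ : Function.Injective σ)
    (b : Module.Basis ι R S) : (Matrix.of fun k i ↦ σ k (b i)).det ≠ 0 := by
  intro hdet
  obtain ⟨v, hv, hvb⟩ := Matrix.exists_vecMul_eq_zero_iff.2 hdet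
  have hli : LinearIndependent L fun k ↦ ((σ k : S →* L) : S → L) :=
    (linearIndependent_monoidHom S L).comp (fun k ↦ (σ k : S →* L)) fun k l hkl ↦
      hσ (AlgHom.ext fun x ↦ DFunLike.congr_fun hkl x)
  have hlin : ∑ k, v k • (σ k).toLinearMap = 0 := b.ext fun i ↦ by
    simpa [Matrix.vecMul, dotProduct] using congrFun hvb i
  refine hv (funext (Fintype.linearIndependent_iff.1 hli v (funext fun x ↦ ?_)))
  simpa using LinearMap.congr_fun hlin x

theorem algebraMap_norm_eq_prod [Module.Finite R S] [Module.Free R S] (hσ : Function.Injective σ)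
    (hcard : Fintype.card ι = Module.finrank R S) (x : S) :
    algebraMap R L (Algebra.norm R x) = ∏ k, σ k x := by
  classical
  have := (algebraMap R L).domain_nontrivial
  let b := (Module.finBasisOfFinrankEq R S hcard.symm).reindex (Fintype.equivFin ι).symm
  have hdet := congrArg Matrix.det (diagonal_mul_conjugates σ b x)
  rw [Matrix.det_mul, Matrix.det_mul, Matrix.det_diagonal, mul_comm, ← RingHom.mapMatrix_apply,
    ← RingHom.map_det, ← Algebra.norm_eq_matrix_det] at hdet
  exact (mul_left_cancel₀ (det_conjugates_ne_zero hσ b) hdet).symm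

end Norm

section PowerSeries

variable {A O : Type*} [CommRing A] [CommRing O] [Algebra A O]

/-- The `A⟦X⟧`-linear coordinates on `O⟦X⟧` obtained by applying those of a finite `A`-basis of `O`
to each coefficient. -/
noncomputable def powerSeriesEquivFun {ι : Type*} [Fintype ι] (b : Module.Basis ι A O) :
    O⟦X⟧ ≃ₗ[A⟦X⟧] (ι → A⟦X⟧) where
  toFun f i := .mk fun n ↦ b.repr (coeff n f) i
  map_add' f g := by
    ext i n
    simp
  map_smul' a f := by
    ext i n
    have smul_eq : a • f = map (algebraMap A O) a * f := rfl
    simp only [smul_eq, coeff_mk, coeff_mul, coeff_map, RingHom.id_apply, Pi.smul_apply,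
      smul_eq_mul, ← Algebra.smul_def, map_sum, map_smul, Finsupp.coe_finsetSum,
      Finset.sum_apply, Finsupp.smul_apply]
  invFun v := .mk fun n ↦ ∑ i, coeff n (v i) • b i
  left_inv f := by
    ext n
    simp [b.sum_repr]
  right_inv v := by
    ext i n
    simp only [coeff_mk, b.repr_sum_self]

instance finite_powerSeries [Module.Finite A O] [Module.Free A O] : Module.Finite A⟦X⟧ O⟦X⟧ :=
  .of_basis (.ofEquivFun (powerSeriesEquivFun (Module.Free.chooseBasis A O)))

instance free_powerSeries [Module.Finite A O] [Module.Free A O] : Module.Free A⟦X⟧ O⟦X⟧ :=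
  .of_basis (.ofEquivFun (powerSeriesEquivFun (Module.Free.chooseBasis A O)))

theorem finrank_powerSeries [Nontrivial A] [Module.Finite A O] [Module.Free A O] :
    Module.finrank A⟦X⟧ O⟦X⟧ = Module.finrank A O := by
  rw [(powerSeriesEquivFun (Module.finBasis A O)).finrank_eq, Module.finrank_fin_fun]

/-- The `A⟦X⟧`-algebra homomorphism applying an `A`-algebra homomorphism to each coefficient. -/
noncomputable def powerSeriesMapAlgHom {L : Type*} [CommRing L] [Algebra A L] (σ : O →ₐ[A] L) :
    O⟦X⟧ →ₐ[A⟦X⟧] L⟦X⟧ where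
  __ := map (σ : O →+* L)
  commutes' a := by
    simp [algebraMap_apply'', ← RingHom.comp_apply, ← map_comp]

theorem powerSeriesMapAlgHom_injective {L : Type*} [CommRing L] [Algebra A L] :
    Function.Injective (powerSeriesMapAlgHom : (O →ₐ[A] L) → O⟦X⟧ →ₐ[A⟦X⟧] L⟦X⟧) := by
  intro σ τ h
  ext x
  exact C_injective (by simpa [powerSeriesMapAlgHom] using DFunLike.congr_fun h (C x))

theorem map_norm_eq_prod_map_algEquiv [IsDomain O] [Module.Finite A O] [Module.Free A O]
    [Fintype (O ≃ₐ[A] O)] (hcard : Fintype.card (O ≃ₐ[A] O) = Module.finrank A O) (f : O⟦X⟧) :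
    map (algebraMap A O) (Algebra.norm A⟦X⟧ f) = ∏ σ : O ≃ₐ[A] O, map (σ : O →+* O) f := by
  have hinj : Function.Injective fun σ : O ≃ₐ[A] O ↦ powerSeriesMapAlgHom (σ : O →ₐ[A] O) :=
    powerSeriesMapAlgHom_injective.comp AlgEquiv.coe_toAlgHom_injective
  have := (algebraMap A O).domain_nontrivial
  exact algebraMap_norm_eq_prod hinj (hcard.trans finrank_powerSeries.symm) f

end PowerSeries

theorem charSeries_of_restriction_of_scalars_general {A O M : Type*} [CommRing A] [IsDomain A]
    [IsPrincipalIdealRing A] [IsLocalRing A] [Finite (IsLocalRing.ResidueField A)] [CommRing O]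
    [IsDomain O] [Algebra A O] [Module.Finite A O] [Module.Free A O] [Fintype (O ≃ₐ[A] O)]
    (hgalois : Fintype.card (O ≃ₐ[A] O) = Module.finrank A O) [AddCommGroup M] [Module O⟦X⟧ M]
    [Module A⟦X⟧ M] [IsScalarTower A⟦X⟧ O⟦X⟧ M] [Module.Finite O⟦X⟧ M]
    (htors : Module.IsTorsion O⟦X⟧ M) (f : O⟦X⟧) (hchar : IsCharSeries O⟦X⟧ M f) :
    Module.Finite A⟦X⟧ M ∧ Module.IsTorsion A⟦X⟧ M ∧
    ∃ Nf : A⟦X⟧, map (algebraMap A O) Nf = ∏ σ : O ≃ₐ[A] O, map (σ : O →+* O) f ∧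
      IsCharSeries A⟦X⟧ M Nf :=
  ⟨.trans O⟦X⟧ M, isTorsion_restrictScalars htors, Algebra.norm A⟦X⟧ f,
    map_norm_eq_prod_map_algEquiv hgalois f, hchar.restrictScalars⟩

/-- let `O = ℤ_p[ψ]` be the ring of integers of a finite unramified extension
`ℚ_p(ψ)/ℚ_p` (formalized: `O` is a local domain, finite and free over `ℤ_p`, whose maximal
ideal is generated by `p`, and with a full group of `ℤ_p`-algebra automorphisms — the
Galois group).  If `M` is a finitely generated torsion module over `Λ[ψ] = O[[T]]` whose
characteristic ideal is generated by `f`, then `M`, viewed as a module over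
`Λ = ℤ_p[[T]]` by restriction of scalars, is a finitely generated torsion `Λ`-module whose
characteristic ideal is generated by the norm `N_{ℚ_p(ψ)/ℚ_p}(f) = ∏_σ σ(f)`, the product
of the Galois conjugates of `f` applied coefficientwise. -/
theorem charSeries_of_restriction_of_scalars (p : ℕ) [Fact p.Prime]
    (O : Type*) [CommRing O] [IsDomain O] [IsLocalRing O] [Algebra ℤ_[p] O]
    [Module.Finite ℤ_[p] O] [Module.Free ℤ_[p] O]
    (hunram : IsLocalRing.maximalIdeal O = Ideal.span {(p : O)})
    [Fintype (O ≃ₐ[ℤ_[p]] O)]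
    (hgalois : Fintype.card (O ≃ₐ[ℤ_[p]] O) = Module.finrank ℤ_[p] O)
    (M : Type*) [AddCommGroup M]
    [Module (PowerSeries O) M] [Module (PowerSeries ℤ_[p]) M]
    (hcompat : ∀ (a : PowerSeries ℤ_[p]) (m : M),
      a • m = (PowerSeries.map (algebraMap ℤ_[p] O) a) • m)
    [Module.Finite (PowerSeries O) M] (htors : Module.IsTorsion (PowerSeries O) M)
    (f : PowerSeries O) (hchar : IsCharSeries (PowerSeries O) M f) :
    Module.Finite (PowerSeries ℤ_[p]) M ∧ Module.IsTorsion (PowerSeries ℤ_[p]) M ∧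
    ∃ Nf : PowerSeries ℤ_[p],
      PowerSeries.map (algebraMap ℤ_[p] O) Nf =
        ∏ σ : O ≃ₐ[ℤ_[p]] O, PowerSeries.map (σ : O →+* O) f ∧
      IsCharSeries (PowerSeries ℤ_[p]) M Nf := by
  have : IsScalarTower ℤ_[p]⟦X⟧ O⟦X⟧ M := .of_algebraMap_smul fun a m ↦ (hcompat a m).symm
  exact charSeries_of_restriction_of_scalars_general hgalois htors f hchar
end

section
/- Let Λ = ℤ_p[[T]] and let M be a finitely generated torsion Λ-module with Iwasawa invariants λ and μ such that M/ω_n M is finite for all n, where ω_n(T) = (1+T)^{p^n} − 1. Then there exist an integer ν and an integer N such that for all n ≥ N, the order of M/ω_n M equals p^{λ n + μ p^n + ν}. -/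
open PowerSeries

/-- `ω_n = (1+T)^(p^n) - 1` in the Iwasawa algebra `Λ = ℤ_p[[T]]`. -/
noncomputable def iwasawaOmega (p : ℕ) [Fact p.Prime] (n : ℕ) : PowerSeries ℤ_[p] :=
  (1 + PowerSeries.X) ^ (p ^ n) - 1

/-- `f = p^μ · P · u` with `P` a distinguished polynomial of degree `λ` and `u` a unit:
this expresses that the Iwasawa invariants of the characteristic series `f` are `λ, μ`. -/
def HasIwasawaInvariants (p : ℕ) [Fact p.Prime] (f : PowerSeries ℤ_[p])
    (lam mu : ℕ) : Prop :=
  ∃ (P : Polynomial ℤ_[p]) (u : (PowerSeries ℤ_[p])ˣ),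
    P.Monic ∧ P.natDegree = lam ∧
    (∀ i < lam, P.coeff i ∈ Ideal.span {(p : ℤ_[p])}) ∧
    f = (p : PowerSeries ℤ_[p]) ^ mu * (P : PowerSeries ℤ_[p]) * u

/-!
The index `[M : rM]` is multiplicative in `r` where `r` acts injectively, so a pseudo-isomorphism
`M → ⨁ Λ/(gᵢ)` shows that `[M : ω_n M]` and `∏ [Λ/(gᵢ) : ω_n]` differ by the index of
`ω_n M ∩ ker` in the finite kernel. These intersections decrease with `n`, so this factor is
eventually constant. Now use the symmetry `[Λ/(g) : ω_n] = [Λ/(ω_n) : g]`: the right side is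
multiplicative in `g`, which reduces everything to the characteristic series `p^μ P u`.

The factor `p^μ` contributes `p^(μ p^n)`, because `Λ/(ω_n)` is free of rank `p^n` over `ℤ_p`. In
`Λ/(P)`, free of rank `λ`, one has `p² ∣ ω_n` for large `n`, so `ω_{n+1} = (1 + ω_n)^p - 1` is
`p ω_n` up to a unit and `[Λ/(P) : ω_n]` grows by the factor `p^λ` at each step.
-/

open scoped Pointwise

section SMulIndex

/-- The index `[M : rM]`; as for `AddSubgroup.index`, it is `0` when `M / rM` is infinite. -/
noncomputable def smulIndex {α : Type*} [Monoid α] (r : α) (M : Type*) [AddCommGroup M]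
    [DistribMulAction α M] : ℕ :=
  (r • (⊤ : AddSubgroup M)).index

variable {α β M N : Type*} [AddCommGroup M] [AddCommGroup N]

theorem card_quotient_range_lsmul {R : Type*} [CommRing R] [Module R M] (r : R) :
    Nat.card (M ⧸ LinearMap.range (LinearMap.lsmul R M r)) = smulIndex r M := by
  rw [LinearMap.range_eq_map]
  rfl

section Monoid

variable [Monoid α] [Monoid β] [DistribMulAction α M]

theorem pointwise_smul_eq_map (r : α) (S : AddSubgroup M) :
    r • S = S.map (DistribSMul.toAddMonoidHom M r) :=
  rfl

theorem index_smul (r : α) (S : AddSubgroup M) :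
    (r • S).index = (S ⊔ (DistribSMul.toAddMonoidHom M r).ker).index * smulIndex r M := by
  rw [smulIndex, pointwise_smul_eq_map, pointwise_smul_eq_map, AddSubgroup.index_map,
    AddMonoidHom.range_eq_map]

theorem index_smul_of_isSMulRegular {r : α} (hr : IsSMulRegular M r) (S : AddSubgroup M) :
    (r • S).index = S.index * smulIndex r M := by
  rw [index_smul, (AddMonoidHom.ker_eq_bot_iff (DistribSMul.toAddMonoidHom M r)).2 hr,
    sup_bot_eq]

theorem smulIndex_mul {r : α} (hr : IsSMulRegular M r) (s : α) :
    smulIndex (r * s) M = smulIndex r M * smulIndex s M := by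
  rw [smulIndex, mul_smul, index_smul_of_isSMulRegular hr, mul_comm]
  rfl

theorem pointwise_smul_top_of_isUnit {r : α} (hr : IsUnit r) : r • (⊤ : AddSubgroup M) = ⊤ := by
  obtain ⟨u, rfl⟩ := hr
  exact eq_top_iff.2 fun x _ ↦ (AddSubgroup.mem_smul_pointwise_iff_exists _ _ _).2
    ⟨(↑u⁻¹ : α) • x, trivial, by rw [smul_smul, u.mul_inv, one_smul]⟩

theorem smulIndex_one : smulIndex (1 : α) M = 1 := by
  rw [smulIndex, one_smul, AddSubgroup.index_top]

theorem smulIndex_eq_of_associated {r s : α} (h : Associated r s) :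
    smulIndex r M = smulIndex s M := by
  obtain ⟨u, rfl⟩ := h
  rw [smulIndex, smulIndex, mul_smul, pointwise_smul_top_of_isUnit u.isUnit]

theorem smulIndex_pow {r : α} (hr : IsSMulRegular M r) (k : ℕ) :
    smulIndex (r ^ k) M = smulIndex r M ^ k := by
  induction k with
  | zero => rw [pow_zero, pow_zero, smulIndex_one]
  | succ k ih => rw [pow_succ', pow_succ', smulIndex_mul hr, ih]

theorem smulIndex_congr {r : α} {s : β} [DistribMulAction β N] (e : M ≃+ N)
    (he : ∀ x, e (r • x) = s • e x) :
    smulIndex r M = smulIndex s N := by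
  have hmap : (r • (⊤ : AddSubgroup M)).map (e : M →+ N) = s • (⊤ : AddSubgroup N) := by
    ext y
    simp only [AddSubgroup.mem_map, AddSubgroup.mem_smul_pointwise_iff_exists,
      AddSubgroup.mem_top, true_and]
    constructor
    · rintro ⟨_, ⟨x, rfl⟩, rfl⟩
      exact ⟨e x, (he x).symm⟩
    · rintro ⟨y, rfl⟩
      exact ⟨_, ⟨e.symm y, rfl⟩, by simpa using he (e.symm y)⟩
  rw [smulIndex, smulIndex, ← hmap, AddSubgroup.index_map_equiv]

theorem smulIndex_pi {ι : Type*} [Fintype ι] {M : ι → Type*} [∀ i, AddCommGroup (M i)]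
    [∀ i, DistribMulAction α (M i)] (r : α) :
    smulIndex r (∀ i, M i) = ∏ i, smulIndex r (M i) := by
  let φ := AddMonoidHom.piMap fun i ↦ QuotientAddGroup.mk' (r • (⊤ : AddSubgroup (M i)))
  have hφ : Function.Surjective φ :=
    Function.Surjective.piMap fun i ↦ QuotientAddGroup.mk'_surjective _
  have hker : φ.ker = r • (⊤ : AddSubgroup (∀ i, M i)) := by
    ext x
    simp only [φ, AddMonoidHom.mem_ker, funext_iff, AddMonoidHom.piMap_apply, Pi.zero_apply,
      QuotientAddGroup.mk'_apply, QuotientAddGroup.eq_zero_iff,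
      AddSubgroup.mem_smul_pointwise_iff_exists, AddSubgroup.mem_top, true_and, Pi.smul_apply,
      Classical.skolem]
  rw [smulIndex, ← hker, AddSubgroup.index_ker, φ.range_eq_top.2 hφ,
    AddSubgroup.card_top, Nat.card_pi]
  rfl

variable [DistribMulAction α N]

theorem map_pointwise_smul_top {r : α} (φ : M →+ N) (hφ : ∀ x, φ (r • x) = r • φ x) :
    (r • (⊤ : AddSubgroup M)).map φ = r • φ.range := by
  rw [φ.range_eq_map, pointwise_smul_eq_map, pointwise_smul_eq_map, AddSubgroup.map_map,
    AddSubgroup.map_map]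
  exact congrArg (AddSubgroup.map · ⊤) (AddMonoidHom.ext hφ)

theorem smulIndex_ne_zero_of_finiteIndex_range {r : α} (φ : M →+ N)
    (hφ : ∀ x, φ (r • x) = r • φ x) [φ.range.FiniteIndex] (hr : smulIndex r M ≠ 0) :
    smulIndex r N ≠ 0 := by
  have hsup : (r • (⊤ : AddSubgroup M) ⊔ φ.ker).index ≠ 0 :=
    ne_zero_of_dvd_ne_zero hr (AddSubgroup.index_dvd_of_le le_sup_left)
  have hindex := AddSubgroup.index_map (r • (⊤ : AddSubgroup M)) φ
  rw [map_pointwise_smul_top φ hφ, index_smul] at hindex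
  exact right_ne_zero_of_mul
    (hindex ▸ mul_ne_zero hsup AddSubgroup.FiniteIndex.index_ne_zero)

theorem smulIndex_eq_relIndex_ker_mul {r : α} (φ : M →+ N) (hφ : ∀ x, φ (r • x) = r • φ x)
    [φ.range.FiniteIndex] (hr : IsSMulRegular N r) :
    smulIndex r M = (r • (⊤ : AddSubgroup M)).relIndex φ.ker * smulIndex r N := by
  have hsup : (r • (⊤ : AddSubgroup M) ⊔ φ.ker).index = smulIndex r N := by
    have hindex := AddSubgroup.index_map (r • (⊤ : AddSubgroup M)) φ
    rw [map_pointwise_smul_top φ hφ, index_smul_of_isSMulRegular hr, mul_comm] at hindex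
    exact (Nat.eq_of_mul_eq_mul_right
      (Nat.pos_of_ne_zero AddSubgroup.FiniteIndex.index_ne_zero) hindex).symm
  rw [← hsup, ← AddSubgroup.relIndex_sup_left, AddSubgroup.relIndex_mul_index le_sup_left,
    smulIndex]

end Monoid

theorem smulIndex_prod [CommMonoid α] [DistribMulAction α M] {ι : Type*} (s : Finset ι) {g : ι → α}
    (hg : ∀ i ∈ s, IsSMulRegular M (g i)) :
    smulIndex (∏ i ∈ s, g i) M = ∏ i ∈ s, smulIndex (g i) M := by
  classical
  induction s using Finset.induction_on with
  | empty => rw [Finset.prod_empty, Finset.prod_empty, smulIndex_one]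
  | insert i s hi ih =>
    rw [Finset.prod_insert hi, Finset.prod_insert hi, smulIndex_mul (hg i (s.mem_insert_self i)),
      ih fun j hj ↦ hg j (Finset.mem_insert_of_mem hj)]

theorem smulIndex_algebraMap {R S : Type*} [CommSemiring R] [Semiring S] [Algebra R S]
    [Module R M] [Module S M] [IsScalarTower R S M] (r : R) :
    smulIndex (algebraMap R S r) M = smulIndex r M :=
  smulIndex_congr (.refl M) fun x ↦ algebraMap_smul S r x

theorem isSMulRegular_natCast {R : Type*} [Semiring R] [Module R M] [IsAddTorsionFree M] {n : ℕ}
    (hn : n ≠ 0) : IsSMulRegular M (n : R) := fun x y hxy ↦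
  nsmul_right_injective hn (by simpa only [Nat.cast_smul_eq_nsmul] using hxy)

theorem exists_forall_ge_relIndex_eq {S : ℕ → AddSubgroup M} (hS : Antitone S)
    (K : AddSubgroup M) [Finite K] : ∃ n₀, ∀ n ≥ n₀, (S n).relIndex K = (S n₀).relIndex K := by
  have hanti : Antitone fun n ↦ (S n).addSubgroupOf K :=
    fun _ _ hmn ↦ AddSubgroup.comap_mono (hS hmn)
  obtain ⟨n₀, hn₀⟩ := WellFoundedLT.antitone_chain_condition hanti
  exact ⟨n₀, fun n hn ↦ congrArg AddSubgroup.index (hn₀ n hn).symm⟩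

-- If `k = [A : rA]`, then `k • 1 = r • v` for some `v`, so `r • x` determines `k • x`.
theorem isSMulRegular_of_smulIndex_ne_zero {A : Type*} [CommRing A] [IsAddTorsionFree A]
    [Monoid α] [DistribMulAction α A] [IsScalarTower α A A] {r : α} (hr : smulIndex r A ≠ 0) :
    IsSMulRegular A r := by
  obtain ⟨v, -, hv⟩ := (AddSubgroup.mem_smul_pointwise_iff_exists _ _ _).1
    (AddSubgroup.nsmul_index_mem (r • (⊤ : AddSubgroup A)) 1)
  have hsmul (x : A) : smulIndex r A • x = r • x * v := by
    rw [← one_mul x, ← smul_mul_assoc, smulIndex, ← hv, one_mul, smul_mul_assoc, smul_mul_assoc,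
      mul_comm]
  intro x y (hxy : r • x = r • y)
  apply nsmul_right_injective hr
  simp only [hsmul, hxy]

theorem exists_card_eq_pow_of_isUnit_natCast {R : Type*} [Semiring R] [Module R M] [Finite M]
    {p : ℕ} (hR : ∀ q : ℕ, q.Prime → q ≠ p → IsUnit (q : R)) : ∃ k, Nat.card M = p ^ k := by
  refine ⟨_, Nat.eq_prime_pow_of_unique_prime_dvd Nat.card_pos.ne' fun {q} hq hqM ↦ ?_⟩
  by_contra hqp
  have : Fact q.Prime := ⟨hq⟩
  obtain ⟨x, hx⟩ := exists_prime_addOrderOf_dvd_card' q hqM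
  have hqx : (q : R) • x = (q : R) • 0 := by
    rw [Nat.cast_smul_eq_nsmul, smul_zero, ← hx, addOrderOf_nsmul_eq_zero]
  rw [(hR q hq hqp).isSMulRegular M hqx, addOrderOf_zero] at hx
  exact hq.one_lt.ne hx

end SMulIndex

section CyclicModules

variable {R : Type*} [CommRing R]

theorem smulIndex_mk (a : R) (I : Ideal R) :
    smulIndex (Ideal.Quotient.mk I a) (R ⧸ I) = smulIndex a (R ⧸ I) :=
  smulIndex_algebraMap a

theorem smulIndex_quotient (a : R) (I : Ideal R) :
    smulIndex a (R ⧸ I) = (Ideal.span {a} ⊔ I).toAddSubgroup.index := by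
  have hcomap : Ideal.span {a} ⊔ I =
      ((Ideal.span {a}).map (Ideal.Quotient.mk I)).comap (Ideal.Quotient.mk I) := by
    rw [Ideal.comap_map_of_surjective' _ Ideal.Quotient.mk_surjective, Ideal.mk_ker]
  have hsmul : a • (⊤ : AddSubgroup (R ⧸ I)) =
      ((Ideal.span {a}).map (Ideal.Quotient.mk I)).toAddSubgroup := by
    ext x
    rw [Ideal.map_span, Set.image_singleton, Submodule.mem_toAddSubgroup, Ideal.mem_span_singleton]
    simp only [AddSubgroup.mem_smul_pointwise_iff_exists, AddSubgroup.mem_top, true_and, dvd_def,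
      Algebra.smul_def, Ideal.Quotient.algebraMap_eq, eq_comm]
  rw [smulIndex, hsmul, hcomap]
  exact (AddSubgroup.index_comap_of_surjective _
    (f := (Ideal.Quotient.mk I).toAddMonoidHom) Ideal.Quotient.mk_surjective).symm

theorem smulIndex_quotient_span_singleton_comm (a b : R) :
    smulIndex a (R ⧸ Ideal.span {b}) = smulIndex b (R ⧸ Ideal.span {a}) := by
  rw [smulIndex_quotient, smulIndex_quotient, sup_comm]

theorem isSMulRegular_quotient_span_singleton_comm {a b : R} (ha : IsSMulRegular R a)
    (hb : IsSMulRegular (R ⧸ Ideal.span {a}) b) : IsSMulRegular (R ⧸ Ideal.span {b}) a := by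
  simp only [isSMulRegular_quotient_iff_mem_of_smul_mem, smul_eq_mul,
    Ideal.mem_span_singleton] at hb ⊢
  rintro x ⟨y, hy⟩
  obtain ⟨z, rfl⟩ := hb y ⟨x, hy.symm⟩
  exact ⟨z, ha (by simp only [smul_eq_mul]; linear_combination hy)⟩

theorem isSMulRegular_of_smulIndex_quotient_ne_zero {a b : R}
    [IsAddTorsionFree (R ⧸ Ideal.span {a})] (hab : smulIndex a (R ⧸ Ideal.span {b}) ≠ 0) :
    IsSMulRegular (R ⧸ Ideal.span {a}) b :=
  isSMulRegular_of_smulIndex_ne_zero (smulIndex_quotient_span_singleton_comm a b ▸ hab)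

theorem IsCharSeries.exists_forall_ge_smulIndex_eq {M : Type*} [AddCommGroup M] [Module R M]
    {f : R} (hf : IsCharSeries R M f) {w : ℕ → R} (hdvd : ∀ n, w n ∣ w (n + 1))
    (hw : ∀ n, IsSMulRegular R (w n)) [∀ n, IsAddTorsionFree (R ⧸ Ideal.span {w n})]
    (hM : ∀ n, smulIndex (w n) M ≠ 0) :
    ∃ c n₀, ∀ n ≥ n₀, smulIndex (w n) M = c * smulIndex f (R ⧸ Ideal.span {w n}) := by
  obtain ⟨r, g, φ, -, rfl, hker, hcoker⟩ := hf
  have : Finite φ.toAddMonoidHom.ker := hker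
  have : φ.toAddMonoidHom.range.FiniteIndex :=
    ⟨AddSubgroup.index_ne_zero_of_finite (hH := hcoker)⟩
  have hcomm (n : ℕ) (x : M) := φ.map_smul (w n) x
  have hne (n : ℕ) (i : Fin r) : smulIndex (w n) (R ⧸ Ideal.span {g i}) ≠ 0 := by
    have hprod := smulIndex_ne_zero_of_finiteIndex_range φ.toAddMonoidHom (hcomm n) (hM n)
    rw [smulIndex_pi] at hprod
    exact Finset.prod_ne_zero_iff.1 hprod i (Finset.mem_univ i)
  have hg (n : ℕ) (i : Fin r) := isSMulRegular_of_smulIndex_quotient_ne_zero (hne n i)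
  have hanti : Antitone fun n ↦ w n • (⊤ : AddSubgroup M) := antitone_nat_of_succ_le fun n ↦ by
    obtain ⟨v, hv⟩ := hdvd n
    rw [hv, mul_smul, pointwise_smul_eq_map (w n), pointwise_smul_eq_map (w n)]
    exact AddSubgroup.map_mono le_top
  obtain ⟨n₀, hn₀⟩ := exists_forall_ge_relIndex_eq hanti φ.toAddMonoidHom.ker
  refine ⟨(w n₀ • ⊤ : AddSubgroup M).relIndex φ.toAddMonoidHom.ker, n₀, fun n hn ↦ ?_⟩
  rw [smulIndex_eq_relIndex_ker_mul φ.toAddMonoidHom (hcomm n)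
    (.pi fun i ↦ isSMulRegular_quotient_span_singleton_comm (hw n) (hg n i)), hn₀ n hn,
    smulIndex_pi, smulIndex_prod _ fun i _ ↦ hg n i]
  simp only [smulIndex_quotient_span_singleton_comm (w n)]

end CyclicModules

section DistinguishedPolynomials

variable {A : Type*} [CommRing A] {I : Ideal A} {Q : Polynomial A}

theorem nonempty_linearEquiv_quotient_of_isDistinguishedAt [IsAdicComplete I A]
    (hQ : Q.IsDistinguishedAt I) :
    Nonempty ((A⟦X⟧ ⧸ Ideal.span {(Q : A⟦X⟧)}) ≃ₗ[A] (Fin Q.natDegree → A)) :=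
  ⟨hQ.algEquivQuotient.symm.toLinearEquiv.trans (AdjoinRoot.powerBasis' hQ.monic).basis.equivFun⟩

theorem isAddTorsionFree_quotient_of_isDistinguishedAt [IsAdicComplete I A] [IsAddTorsionFree A]
    (hQ : Q.IsDistinguishedAt I) : IsAddTorsionFree (A⟦X⟧ ⧸ Ideal.span {(Q : A⟦X⟧)}) := by
  obtain ⟨e⟩ := nonempty_linearEquiv_quotient_of_isDistinguishedAt hQ
  exact e.injective.isAddTorsionFree e.toAddEquiv.toAddMonoidHom

theorem smulIndex_quotient_of_isDistinguishedAt [IsAdicComplete I A] (hQ : Q.IsDistinguishedAt I)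
    (a : A) : smulIndex a (A⟦X⟧ ⧸ Ideal.span {(Q : A⟦X⟧)}) = smulIndex a A ^ Q.natDegree := by
  obtain ⟨e⟩ := nonempty_linearEquiv_quotient_of_isDistinguishedAt hQ
  rw [smulIndex_congr e.toAddEquiv (e.map_smul a), smulIndex_pi, Finset.prod_const,
    Finset.card_univ, Fintype.card_fin]

theorem C_dvd_sub_X_pow_of_isDistinguishedAt {a : A} (hQ : Q.IsDistinguishedAt (Ideal.span {a})) :
    Polynomial.C a ∣ Q - Polynomial.X ^ Q.natDegree := by
  rw [← Ideal.mem_span_singleton, ← Set.image_singleton, ← Ideal.map_span,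
    ← Ideal.mk_ker (I := Ideal.span {a}), ← Polynomial.ker_mapRingHom, RingHom.mem_ker]
  simp [hQ.map_eq_X_pow]

theorem algebraMap_dvd_mk_of_isDistinguishedAt {a : A} {P : Polynomial A}
    (hP : P.IsDistinguishedAt (Ideal.span {a})) (hQ : Q.IsDistinguishedAt (Ideal.span {a}))
    (hdeg : P.natDegree ≤ Q.natDegree) :
    algebraMap A (A⟦X⟧ ⧸ Ideal.span {(P : A⟦X⟧)}) a ∣ Ideal.Quotient.mk _ (Q : A⟦X⟧) := by
  obtain ⟨F, hF⟩ := C_dvd_sub_X_pow_of_isDistinguishedAt hP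
  obtain ⟨G, hG⟩ := C_dvd_sub_X_pow_of_isDistinguishedAt hQ
  obtain ⟨j, hj⟩ := Nat.exists_eq_add_of_le hdeg
  have hQP : Q = Polynomial.C a * (G - F * Polynomial.X ^ j) + P * Polynomial.X ^ j := by
    rw [hj, pow_add] at hG
    linear_combination hG - Polynomial.X ^ j * hF
  refine ⟨Ideal.Quotient.mk _ (G - F * Polynomial.X ^ j : Polynomial A), ?_⟩
  rw [IsScalarTower.algebraMap_apply A A⟦X⟧, Ideal.Quotient.algebraMap_eq, ← map_mul,
    Ideal.Quotient.mk_eq_mk_iff_sub_mem, Ideal.mem_span_singleton]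
  refine ⟨PowerSeries.X ^ j, ?_⟩
  conv_lhs => rw [hQP]
  simp

theorem algebraMap_mem_jacobson_bot_quotient {a : A} (ha : a ∈ (⊥ : Ideal A).jacobson)
    (J : Ideal A⟦X⟧) : algebraMap A (A⟦X⟧ ⧸ J) a ∈ (⊥ : Ideal (A⟦X⟧ ⧸ J)).jacobson := by
  rw [Ideal.mem_jacobson_bot]
  intro y
  obtain ⟨y, rfl⟩ := Ideal.Quotient.mk_surjective y
  have hunit : IsUnit (algebraMap A A⟦X⟧ a * y + 1) := by
    rw [PowerSeries.isUnit_iff_constantCoeff]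
    simpa [PowerSeries.algebraMap_apply] using Ideal.mem_jacobson_bot.1 ha (constantCoeff y)
  rw [IsScalarTower.algebraMap_apply A A⟦X⟧, Ideal.Quotient.algebraMap_eq]
  simpa only [map_add, map_mul, map_one] using hunit.map (Ideal.Quotient.mk J)

end DistinguishedPolynomials

theorem associated_one_add_pow_sub_one {B : Type*} [CommRing B] {m : ℕ} {z : B}
    (hm : (m : B) ∈ (⊥ : Ideal B).jacobson) (hz : (m : B) ^ 2 ∣ z) :
    Associated ((1 + z) ^ m - 1) (m * z) := by
  obtain ⟨h, hh⟩ := Polynomial.powAddExpansion 1 z m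
  obtain ⟨t, ht⟩ := hz
  obtain ⟨u, hu⟩ := Ideal.mem_jacobson_bot.1 hm (t * h)
  refine Associated.symm ⟨u, ?_⟩
  rw [hu, hh, one_pow, one_pow]
  linear_combination (-h * z) * ht

section PadicInt

variable {p : ℕ} [Fact p.Prime]

instance isAdicComplete_span_natCast_padicInt :
    IsAdicComplete (Ideal.span {(p : ℤ_[p])}) ℤ_[p] := by
  rw [← PadicInt.maximalIdeal_eq_span_p]
  infer_instance

theorem smulIndex_natCast_padicInt : smulIndex (p : ℤ_[p]) ℤ_[p] = p := by
  have hrange : LinearMap.range (LinearMap.lsmul ℤ_[p] ℤ_[p] (p : ℤ_[p])) =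
      IsLocalRing.maximalIdeal ℤ_[p] := by
    ext x
    simp only [PadicInt.maximalIdeal_eq_span_p, LinearMap.mem_range, LinearMap.lsmul_apply,
      smul_eq_mul, Ideal.mem_span_singleton, dvd_def, eq_comm]
  rw [← card_quotient_range_lsmul, hrange]
  exact (Nat.card_congr PadicInt.residueField.toEquiv).trans (Nat.card_zmod p)

theorem isUnit_natCast_powerSeries_padicInt {q : ℕ} (hq : q.Prime) (hqp : q ≠ p) :
    IsUnit (q : ℤ_[p]⟦X⟧) := by
  have hunit : IsUnit (q : ℤ_[p]) := PadicInt.isUnit_iff.2 <|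
    PadicInt.norm_natCast_eq_one_iff.2 ((Nat.coprime_primes Fact.out hq).2 hqp.symm)
  simpa using hunit.map (algebraMap ℤ_[p] ℤ_[p]⟦X⟧)

end PadicInt

section Omega

variable {p : ℕ} [Fact p.Prime]

theorem iwasawaOmega_succ (n : ℕ) : iwasawaOmega p (n + 1) = (1 + iwasawaOmega p n) ^ p - 1 := by
  rw [iwasawaOmega, iwasawaOmega, add_sub_cancel, pow_succ, pow_mul]

theorem iwasawaOmega_dvd_succ (n : ℕ) : iwasawaOmega p n ∣ iwasawaOmega p (n + 1) := by
  simpa only [iwasawaOmega_succ, add_sub_cancel_left] using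
    sub_one_dvd_pow_sub_one (1 + iwasawaOmega p n) p

theorem exists_isDistinguishedAt_coe_eq_iwasawaOmega (n : ℕ) :
    ∃ Q : Polynomial ℤ_[p], Q.IsDistinguishedAt (Ideal.span {(p : ℤ_[p])}) ∧
      Q.natDegree = p ^ n ∧ (Q : ℤ_[p]⟦X⟧) = iwasawaOmega p n := by
  have hp : p.Prime := Fact.out
  have hdeg : ((1 + Polynomial.X : Polynomial ℤ_[p]) ^ p ^ n - 1).IsMonicOfDegree (p ^ n) := by
    have hlin := (Polynomial.isMonicOfDegree_X_add_one (1 : ℤ_[p])).pow (p ^ n)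
    rw [Polynomial.C_1, add_comm, one_mul] at hlin
    exact hlin.sub (by simpa using pow_pos hp.pos n)
  refine ⟨_, ⟨⟨fun {i} hi ↦ ?_⟩, hdeg.monic⟩, hdeg.natDegree_eq, by simp [iwasawaOmega]⟩
  rw [hdeg.natDegree_eq] at hi
  rw [Polynomial.coeff_sub, Polynomial.coeff_one_add_X_pow, Polynomial.coeff_one,
    Ideal.mem_span_singleton]
  obtain rfl | hi₀ := eq_or_ne i 0
  · simp
  · rw [if_neg hi₀, sub_zero]
    exact Nat.cast_dvd_cast (hp.dvd_choose_pow hi₀ hi.ne)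

theorem isSMulRegular_iwasawaOmega (n : ℕ) : IsSMulRegular ℤ_[p]⟦X⟧ (iwasawaOmega p n) := by
  obtain ⟨Q, hQ, -, hcoe⟩ := exists_isDistinguishedAt_coe_eq_iwasawaOmega (p := p) n
  rw [← hcoe]
  exact IsSMulRegular.of_ne_zero (mt Polynomial.coe_eq_zero_iff.1 hQ.monic.ne_zero)

instance isAddTorsionFree_quotient_iwasawaOmega (n : ℕ) :
    IsAddTorsionFree (ℤ_[p]⟦X⟧ ⧸ Ideal.span {iwasawaOmega p n}) := by
  obtain ⟨Q, hQ, -, hcoe⟩ := exists_isDistinguishedAt_coe_eq_iwasawaOmega (p := p) n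
  exact hcoe ▸ isAddTorsionFree_quotient_of_isDistinguishedAt hQ

theorem smulIndex_natCast_quotient_of_isDistinguishedAt {Q : Polynomial ℤ_[p]}
    (hQ : Q.IsDistinguishedAt (Ideal.span {(p : ℤ_[p])})) :
    smulIndex (p : ℤ_[p]⟦X⟧) (ℤ_[p]⟦X⟧ ⧸ Ideal.span {(Q : ℤ_[p]⟦X⟧)}) = p ^ Q.natDegree := by
  rw [← map_natCast (algebraMap ℤ_[p] ℤ_[p]⟦X⟧), smulIndex_algebraMap,
    smulIndex_quotient_of_isDistinguishedAt hQ, smulIndex_natCast_padicInt]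

theorem smulIndex_natCast_quotient_iwasawaOmega (n : ℕ) :
    smulIndex (p : ℤ_[p]⟦X⟧) (ℤ_[p]⟦X⟧ ⧸ Ideal.span {iwasawaOmega p n}) = p ^ p ^ n := by
  obtain ⟨Q, hQ, hdeg, hcoe⟩ := exists_isDistinguishedAt_coe_eq_iwasawaOmega (p := p) n
  rw [← hcoe, smulIndex_natCast_quotient_of_isDistinguishedAt hQ, hdeg]

variable {P : Polynomial ℤ_[p]}

theorem natCast_dvd_mk_iwasawaOmega (hP : P.IsDistinguishedAt (Ideal.span {(p : ℤ_[p])})) {n : ℕ}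
    (hn : P.natDegree ≤ p ^ n) :
    (p : ℤ_[p]⟦X⟧ ⧸ Ideal.span {(P : ℤ_[p]⟦X⟧)}) ∣ Ideal.Quotient.mk _ (iwasawaOmega p n) := by
  obtain ⟨Q, hQ, hdeg, hcoe⟩ := exists_isDistinguishedAt_coe_eq_iwasawaOmega (p := p) n
  rw [← hcoe, ← map_natCast (algebraMap ℤ_[p] _)]
  exact algebraMap_dvd_mk_of_isDistinguishedAt hP hQ (hdeg.symm ▸ hn)

theorem associated_mk_iwasawaOmega_succ (hP : P.IsDistinguishedAt (Ideal.span {(p : ℤ_[p])}))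
    {n : ℕ} (hn : P.natDegree < n) :
    Associated (Ideal.Quotient.mk (Ideal.span {(P : ℤ_[p]⟦X⟧)}) (iwasawaOmega p (n + 1)))
      (p * Ideal.Quotient.mk (Ideal.span {(P : ℤ_[p]⟦X⟧)}) (iwasawaOmega p n)) := by
  have hp : (p : ℤ_[p]⟦X⟧ ⧸ Ideal.span {(P : ℤ_[p]⟦X⟧)}) ∈ (⊥ : Ideal _).jacobson := by
    rw [← map_natCast (algebraMap ℤ_[p] _)]
    exact algebraMap_mem_jacobson_bot_quotient
      (IsAdicComplete.le_jacobson_bot _ (Ideal.mem_span_singleton_self _)) _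
  have hsq : (p : ℤ_[p]⟦X⟧ ⧸ Ideal.span {(P : ℤ_[p]⟦X⟧)}) ^ 2 ∣
      Ideal.Quotient.mk _ (iwasawaOmega p n) := by
    obtain ⟨n, rfl⟩ := Nat.exists_eq_succ_of_ne_zero (Nat.ne_zero_of_lt hn)
    have hdvd := natCast_dvd_mk_iwasawaOmega hP (n := n)
      ((Nat.lt_succ_iff.1 hn).trans (Nat.lt_pow_self (Fact.out : p.Prime).one_lt).le)
    rw [← add_sub_cancel_left (1 : _ ⧸ _) (Ideal.Quotient.mk _ _)] at hdvd
    simpa [iwasawaOmega_succ] using dvd_sub_pow_of_dvd_sub hdvd 1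
  simpa [iwasawaOmega_succ n] using associated_one_add_pow_sub_one hp hsq

theorem smulIndex_iwasawaOmega_succ (hP : P.IsDistinguishedAt (Ideal.span {(p : ℤ_[p])}))
    {n : ℕ} (hn : P.natDegree < n) :
    smulIndex (iwasawaOmega p (n + 1)) (ℤ_[p]⟦X⟧ ⧸ Ideal.span {(P : ℤ_[p]⟦X⟧)}) =
      p ^ P.natDegree *
        smulIndex (iwasawaOmega p n) (ℤ_[p]⟦X⟧ ⧸ Ideal.span {(P : ℤ_[p]⟦X⟧)}) := by
  have := isAddTorsionFree_quotient_of_isDistinguishedAt hP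
  rw [← smulIndex_mk, smulIndex_eq_of_associated (associated_mk_iwasawaOmega_succ hP hn),
    smulIndex_mul (isSMulRegular_natCast (NeZero.ne p)), smulIndex_mk,
    ← smulIndex_natCast_quotient_of_isDistinguishedAt hP, ← smulIndex_mk (p : ℤ_[p]⟦X⟧),
    map_natCast]

theorem smulIndex_iwasawaOmega_add (hP : P.IsDistinguishedAt (Ideal.span {(p : ℤ_[p])}))
    {n : ℕ} (hn : P.natDegree < n) (k : ℕ) :
    smulIndex (iwasawaOmega p (n + k)) (ℤ_[p]⟦X⟧ ⧸ Ideal.span {(P : ℤ_[p]⟦X⟧)}) =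
      p ^ (P.natDegree * k) *
        smulIndex (iwasawaOmega p n) (ℤ_[p]⟦X⟧ ⧸ Ideal.span {(P : ℤ_[p]⟦X⟧)}) := by
  induction k with
  | zero => simp
  | succ k ih =>
    rw [← add_assoc, smulIndex_iwasawaOmega_succ hP (Nat.lt_add_right k hn), ih]
    ring

theorem HasIwasawaInvariants.exists_smulIndex_quotient_eq {f : ℤ_[p]⟦X⟧} {lam mu : ℕ}
    (hf : HasIwasawaInvariants p f lam mu) {N : ℕ} (hN : lam < N) :
    ∃ c, ∀ k, smulIndex f (ℤ_[p]⟦X⟧ ⧸ Ideal.span {iwasawaOmega p (N + k)}) =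
      c * p ^ (lam * k + mu * p ^ (N + k)) := by
  obtain ⟨P, u, hmonic, rfl, hcoeff, rfl⟩ := hf
  have hP : P.IsDistinguishedAt (Ideal.span {(p : ℤ_[p])}) := ⟨⟨hcoeff _⟩, hmonic⟩
  refine ⟨smulIndex (iwasawaOmega p N) (ℤ_[p]⟦X⟧ ⧸ Ideal.span {(P : ℤ_[p]⟦X⟧)}), fun k ↦ ?_⟩
  have hp : IsSMulRegular (ℤ_[p]⟦X⟧ ⧸ Ideal.span {iwasawaOmega p (N + k)}) (p : ℤ_[p]⟦X⟧) :=
    isSMulRegular_natCast (NeZero.ne p)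
  rw [smulIndex_eq_of_associated (associated_mul_unit_left _ _ u.isUnit),
    smulIndex_mul (hp.pow mu), smulIndex_pow hp, smulIndex_natCast_quotient_iwasawaOmega,
    smulIndex_quotient_span_singleton_comm, smulIndex_iwasawaOmega_add hP hN]
  ring

end Omega

/-- Iwasawa's asymptotic formula. If `M` is a finitely generated torsion
`Λ = ℤ_p[[T]]`-module with invariants `λ, μ` and all coinvariants `M/ω_n M` finite, then
there are `ν ∈ ℤ` and `N` such that `|M/ω_n M| = p^(λ n + μ p^n + ν)` for all `n ≥ N`. -/
theorem iwasawa_asymptotic_formula (p : ℕ) [Fact p.Prime]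
    (M : Type*) [AddCommGroup M] [Module (PowerSeries ℤ_[p]) M]
    [Module.Finite (PowerSeries ℤ_[p]) M]
    (htors : Module.IsTorsion (PowerSeries ℤ_[p]) M)
    (f : PowerSeries ℤ_[p]) (hchar : IsCharSeries (PowerSeries ℤ_[p]) M f)
    (lam mu : ℕ) (hinv : HasIwasawaInvariants p f lam mu)
    (hfin : ∀ n : ℕ, Finite
      (M ⧸ LinearMap.range (LinearMap.lsmul (PowerSeries ℤ_[p]) M (iwasawaOmega p n)))) :
    ∃ (nu : ℤ) (N : ℕ), ∀ n ≥ N,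
      (Nat.card
        (M ⧸ LinearMap.range (LinearMap.lsmul (PowerSeries ℤ_[p]) M (iwasawaOmega p n))) : ℚ)
        = (p : ℚ) ^ ((lam : ℤ) * n + (mu : ℤ) * p ^ n + nu) := by
  have hcard (n : ℕ) := card_quotient_range_lsmul (M := M) (iwasawaOmega p n)
  obtain ⟨c, N₀, hM⟩ := hchar.exists_forall_ge_smulIndex_eq iwasawaOmega_dvd_succ
    isSMulRegular_iwasawaOmega fun n ↦ hcard n ▸ Nat.card_pos.ne'
  let N := max N₀ (lam + 1)
  obtain ⟨d, hf⟩ := hinv.exists_smulIndex_quotient_eq (N := N) (Nat.lt_of_succ_le (le_max_right ..))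
  have hindex (k : ℕ) : smulIndex (iwasawaOmega p (N + k)) M =
      c * d * p ^ (lam * k + mu * p ^ (N + k)) := by
    rw [hM _ (le_add_right (le_max_left ..)), hf, mul_assoc]
  obtain ⟨e, he⟩ : ∃ e, smulIndex (iwasawaOmega p N) M = p ^ e :=
    hcard N ▸ exists_card_eq_pow_of_isUnit_natCast fun _ ↦ isUnit_natCast_powerSeries_padicInt
  obtain ⟨j, -, hj⟩ : ∃ j ≤ e, c * d = p ^ j :=
    (Nat.dvd_prime_pow Fact.out).1 (he ▸ hindex 0 ▸ dvd_mul_right ..)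
  refine ⟨j - lam * N, N, fun n hn ↦ ?_⟩
  obtain ⟨k, rfl⟩ := Nat.exists_eq_add_of_le hn
  rw [hcard, hindex, hj, ← pow_add, Nat.cast_pow, ← zpow_natCast]
  congr 1
  push_cast
  ring
end
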